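/- Let a, b, c be nonnegative integers with a ≥ b−1 and a, b ≥ c−1. Then there exists a bijection φ from the set of heads to the set of quasiheads such that the area range of every head equals the area range of its image under φ. -/

import Mathlib

/-- `⌈m/2⌉` for an integer `m`, computed as `⌊(m+1)/2⌋`. -/
def ceilHalf (m : ℤ) : ℤ := Int.fdiv (m + 1) 2

/-- `ε^{EF} = max(0, E+2F−b−c)` for tails. -/
def epsT (b c E F : ℤ) : ℤ := max 0 (E + 2 * F - b - c)

/-- `δ^{EF} = ⌈(E+F−a)/2⌉` for tails. -/
def delT (a E F : ℤ) : ℤ := ceilHalf (E + F - a)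

/-- `(E,F)` is a tail index pair. -/
def IsTail (a b c E F : ℤ) : Prop :=
  0 ≤ F ∧ F ≤ c - epsT b c E F ∧ 2 * epsT b c E F ≤ E ∧ E ≤ F + a ∧
    4 * E + 5 * F - 3 * epsT b c E F ≤ a + 3 * b + 3 * c

/-- `ε_{ij} = max(0, i+j−b−c)` for pseudoheads. -/
def epsP (b c i j : ℤ) : ℤ := max 0 (i + j - b - c)

/-- `δ_{ij} = ⌈(i+ε_{ij}−a)/2⌉` for pseudoheads. -/
def delP (a b c i j : ℤ) : ℤ := ceilHalf (i + epsP b c i j - a)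

/-- `(i,j)` is a pseudohead index pair. -/
def IsPseudohead (a b c i j : ℤ) : Prop :=
  0 ≤ j ∧ j ≤ c ∧ j ≤ i ∧ i ≤ b + c ∧ 4 * i + j ≤ a + 3 * b + 3 * c ∧ i - 2 * j ≤ a

/-- `(s,t')` is a quasihead index pair. -/
def IsQuasihead (a b c s t' : ℤ) : Prop :=
  0 ≤ t' ∧ t' ≤ c ∧ t' ≤ s ∧ s ≤ b + c ∧
    2 * s + 2 * t' ≤ a + b + 2 * c - (c - t') % 2

/-- The set of heads `H = H⁻ ∪ H⁺`: `H⁻` consists of the triples `(i,i,j)` for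
pseudohead index pairs `(i,j)` with `δ_{ij} ≤ ε_{ij}`, and
`H⁺ = {(k,ℓ,0) : a < ℓ ≤ k < b+c}`. -/
def Heads (a b c : ℤ) : Set (ℤ × ℤ × ℤ) :=
  {x | (x.2.1 = x.1 ∧ IsPseudohead a b c x.1 x.2.2 ∧
          delP a b c x.1 x.2.2 ≤ epsP b c x.1 x.2.2) ∨
       (x.2.2 = 0 ∧ a < x.2.1 ∧ x.2.1 ≤ x.1 ∧ x.1 < b + c)}

/-- The set of quasiheads: the triples `(s,s,t')` for quasihead index pairs `(s,t')`. -/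
def Quasiheads (a b c : ℤ) : Set (ℤ × ℤ × ℤ) :=
  {x | x.2.1 = x.1 ∧ IsQuasihead a b c x.1 x.2.2}

/-- The area range of a head, recorded as the pair of its endpoints: a positive head
`(k,ℓ,0)` (characterized among heads by `z = 0` and `a < ℓ`) has area range
`[ℓ, A−k−ℓ]`, and a negative head `(i,i,j)` has area range
`[i+ε_{ij}, A−2i−j+max(0, δ_{ij}−ε_{ij})]`. -/
def headRange (a b c : ℤ) (x : ℤ × ℤ × ℤ) : ℤ × ℤ :=
  if x.2.2 = 0 ∧ a < x.2.1 then
    (x.2.1, a + 2 * b + 3 * c - x.1 - x.2.1)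
  else
    (x.1 + epsP b c x.1 x.2.2,
      a + 2 * b + 3 * c - 2 * x.1 - x.2.2
        + max 0 (delP a b c x.1 x.2.2 - epsP b c x.1 x.2.2))

/-- The area range of a quasihead `(s,s,t')`, recorded as the pair of its endpoints
`(s+ε_{st'}, A−2s−t')`. -/
def quasiheadRange (a b c : ℤ) (x : ℤ × ℤ × ℤ) : ℤ × ℤ :=
  (x.1 + max 0 (x.1 + x.2.2 - b - c), a + 2 * b + 3 * c - 2 * x.1 - x.2.2)

/-!
Both area ranges depend on few parameters. As long as `k + z < b + c`, a head `(k, ℓ, z)` has area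
range `[ℓ, A - k - ℓ - z]`, which is that of the triple `(ℓ, ℓ, k + z - ℓ)`; negative heads are
fixed by this replacement and have `ℓ ≤ a`, positive ones have `a < ℓ`, so that both are recovered.

If `k + z ≥ b + c`, the range is `[N - b - c, A - N]` with `N = 2k + z`, for heads and quasiheads
alike. On a line `N = const`, the third coordinate `z ≡ N (mod 2)` of a head satisfies
`|N - 2(b + c)| + 2h ≤ z ≤ c`, and that of a quasihead `|N - 2(b + c)| ≤ z ≤ c - 2h`, where
`h = ⌈max(0, N - a - b - c) / 2⌉`. Translating by `2h` along the line matches the two.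
-/

section Piecewise

variable {α β : Type*} {s u : Set α} {t v : Set β} {f g : α → β}

theorem bijOn_piecewise [∀ x, Decidable (x ∈ u)] (hf : Set.BijOn f (s ∩ u) (t ∩ v))
    (hg : Set.BijOn g (s ∩ uᶜ) (t ∩ vᶜ)) : Set.BijOn (u.piecewise f g) s t := by
  have hf' : Set.BijOn (u.piecewise f g) (s ∩ u) (t ∩ v) :=
    hf.congr ((u.piecewise_eqOn f g).symm.mono Set.inter_subset_right)
  have hg' : Set.BijOn (u.piecewise f g) (s ∩ uᶜ) (t ∩ vᶜ) :=
    hg.congr ((u.piecewise_eqOn_compl f g).symm.mono Set.inter_subset_right)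
  have hinj : Set.InjOn (u.piecewise f g) (s ∩ u ∪ s ∩ uᶜ) := by
    refine (Set.injOn_union ?_).2 ⟨hf'.injOn, hg'.injOn, fun x hx y hy hxy => ?_⟩
    · exact disjoint_compl_right.mono Set.inter_subset_right Set.inter_subset_right
    · exact (hg'.mapsTo hy).2 (hxy ▸ (hf'.mapsTo hx).2)
  simpa only [Set.inter_union_compl] using hf'.union hg' hinj

end Piecewise

theorem ceilHalf_le_iff {m n : ℤ} : ceilHalf m ≤ n ↔ m ≤ 2 * n := by
  rw [ceilHalf, Int.fdiv_eq_ediv_of_nonneg _ zero_le_two]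
  omega

theorem delP_le_epsP_iff {a b c i j : ℤ} :
    delP a b c i j ≤ epsP b c i j ↔ i - epsP b c i j ≤ a := by
  rw [delP, ceilHalf_le_iff]
  omega

/-- The nondegenerate triples `(k, ℓ, z)`: those with `k + z < b + c`, for which the correction
term `ε_{kz} = max(0, k + z - b - c)` vanishes; the boundary case `k + z = b + c` is left to the
complement. -/
def nondegenerate (b c : ℤ) : Set (ℤ × ℤ × ℤ) :=
  {x | x.1 + x.2.2 < b + c}

section Nondegenerate

variable {a b c k l s t z : ℤ} {x : ℤ × ℤ × ℤ}

/-- The correspondence on nondegenerate heads; it fixes the negative ones, as `ℓ = k` there. -/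
def foldHead (x : ℤ × ℤ × ℤ) : ℤ × ℤ × ℤ :=
  (x.2.1, x.2.1, x.1 + x.2.2 - x.2.1)

theorem mem_heads_inter_nondegenerate :
    (k, l, z) ∈ Heads a b c ∩ nondegenerate b c ↔
      k + z < b + c ∧ (l = k ∧ 0 ≤ z ∧ z ≤ c ∧ z ≤ k ∧ k ≤ a ∨ z = 0 ∧ a < l ∧ l ≤ k) := by
  simp only [Heads, nondegenerate, Set.mem_inter_iff, Set.mem_ofPred_eq, IsPseudohead,
    delP_le_epsP_iff]
  simp only [epsP]
  omega

theorem mem_quasiheads_inter_nondegenerate (hab : b - 1 ≤ a) :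
    (s, l, t) ∈ Quasiheads a b c ∩ nondegenerate b c ↔
      l = s ∧ 0 ≤ t ∧ t ≤ c ∧ t ≤ s ∧ s + t < b + c := by
  simp only [Quasiheads, nondegenerate, Set.mem_inter_iff, Set.mem_ofPred_eq, IsQuasihead]
  omega

theorem bijOn_foldHead (hab : b - 1 ≤ a) (hbc : c - 1 ≤ b) :
    Set.BijOn foldHead (Heads a b c ∩ nondegenerate b c)
      (Quasiheads a b c ∩ nondegenerate b c) := by
  refine ⟨?mapsTo, ?injOn, ?surjOn⟩
  case mapsTo =>
    rintro ⟨k, l, z⟩ hx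
    rw [mem_heads_inter_nondegenerate] at hx
    refine (mem_quasiheads_inter_nondegenerate hab).2 ?_
    dsimp only
    rcases hx with ⟨hlt, ⟨rfl, hneg⟩ | ⟨rfl, hal, hlk⟩⟩
    · omega
    · have hbl : b ≤ l := by omega
      have hwidth : k - l < c := by omega
      omega
  case injOn =>
    rintro ⟨k, l, z⟩ hx ⟨k', l', z'⟩ hy hxy
    rw [mem_heads_inter_nondegenerate] at hx hy
    simp only [foldHead, Prod.mk.injEq] at hxy
    rw [Prod.mk.injEq, Prod.mk.injEq]
    omega
  case surjOn =>
    rintro ⟨s, l, t⟩ hy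
    rw [mem_quasiheads_inter_nondegenerate hab] at hy
    obtain ⟨rfl, ht, htc, hts, hlt⟩ := hy
    rcases le_or_gt l a with hla | hal
    · refine ⟨(l, l, t), mem_heads_inter_nondegenerate.2 (by omega), ?_⟩
      simp only [foldHead, add_sub_cancel_left]
    · refine ⟨(l + t, l, 0), mem_heads_inter_nondegenerate.2 (by omega), ?_⟩
      simp only [foldHead, add_zero, add_sub_cancel_left]

theorem headRange_of_mem_nondegenerate (hx : x ∈ Heads a b c ∩ nondegenerate b c) :
    headRange a b c x = (x.2.1, a + 2 * b + 3 * c - x.1 - x.2.1 - x.2.2) := by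
  simp only [Heads, nondegenerate, Set.mem_inter_iff, Set.mem_ofPred_eq] at hx
  have heps : epsP b c x.1 x.2.2 = 0 := max_eq_left (by omega)
  simp only [headRange]
  split_ifs <;> rw [Prod.mk.injEq] <;> omega

theorem quasiheadRange_of_mem_nondegenerate (hx : x ∈ nondegenerate b c) :
    quasiheadRange a b c x = (x.1, a + 2 * b + 3 * c - 2 * x.1 - x.2.2) := by
  simp only [nondegenerate, Set.mem_ofPred_eq] at hx
  rw [quasiheadRange, Prod.mk.injEq]
  omega

theorem headRange_eq_quasiheadRange_foldHead (hab : b - 1 ≤ a) (hbc : c - 1 ≤ b)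
    (hx : x ∈ Heads a b c ∩ nondegenerate b c) :
    headRange a b c x = quasiheadRange a b c (foldHead x) := by
  rw [headRange_of_mem_nondegenerate hx,
    quasiheadRange_of_mem_nondegenerate ((bijOn_foldHead hab hbc).mapsTo hx).2, Prod.mk.injEq]
  dsimp only [foldHead]
  omega

end Nondegenerate

section Degenerate

variable {a b c k l s t z : ℤ} {x : ℤ × ℤ × ℤ}

/-- The translation by `n` steps along a line `2k + z = const`, moving `ℓ` together with `k` so as
to keep triples with `ℓ = k` of that form. -/
def translateLine (n : ℤ) (x : ℤ × ℤ × ℤ) : ℤ × ℤ × ℤ :=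
  (x.1 + n, x.2.1 + n, x.2.2 - 2 * n)

/-- The number `h = ⌈max(0, N - a - b - c) / 2⌉` of steps by which a degenerate head on the line
`2k + z = N` is translated; as a function of the triple it is constant along these lines. -/
def lineShift (a b c : ℤ) (x : ℤ × ℤ × ℤ) : ℤ :=
  ceilHalf (max 0 (2 * x.1 + x.2.2 - a - b - c))

theorem translateLine_translateLine (m n : ℤ) (x : ℤ × ℤ × ℤ) :
    translateLine m (translateLine n x) = translateLine (n + m) x := by
  simp only [translateLine, Prod.mk.injEq]
  omega

theorem translateLine_zero (x : ℤ × ℤ × ℤ) : translateLine 0 x = x := by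
  simp only [translateLine, add_zero, mul_zero, sub_zero]

theorem lineShift_translateLine (n : ℤ) (x : ℤ × ℤ × ℤ) :
    lineShift a b c (translateLine n x) = lineShift a b c x := by
  simp only [lineShift, translateLine]
  congr 2
  ring

/-- The correspondence on degenerate heads: the translation by `lineShift`, a permutation of all
triples because that shift is constant along the lines. -/
def slideHead (a b c : ℤ) : ℤ × ℤ × ℤ ≃ ℤ × ℤ × ℤ where
  toFun x := translateLine (lineShift a b c x) x
  invFun x := translateLine (-lineShift a b c x) x
  left_inv x := by
    beta_reduce
    rw [lineShift_translateLine, translateLine_translateLine, add_neg_cancel, translateLine_zero]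
  right_inv x := by
    beta_reduce
    rw [lineShift_translateLine, translateLine_translateLine, neg_add_cancel, translateLine_zero]

theorem lineShift_le_iff {n : ℤ} :
    lineShift a b c x ≤ n ↔ 0 ≤ n ∧ 2 * x.1 + x.2.2 - a - b - c ≤ 2 * n := by
  rw [lineShift, ceilHalf_le_iff]
  omega

theorem lineShift_nonneg : 0 ≤ lineShift a b c x :=
  (lineShift_le_iff.1 le_rfl).1

theorem mem_heads_inter_compl_nondegenerate :
    (k, l, z) ∈ Heads a b c ∩ (nondegenerate b c)ᶜ ↔
      l = k ∧ z ≤ k ∧ z ≤ c ∧ k + lineShift a b c (k, l, z) ≤ b + c ∧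
        b + c ≤ k + z - lineShift a b c (k, l, z) := by
  simp only [Heads, nondegenerate, Set.mem_inter_iff, Set.mem_compl_iff, Set.mem_ofPred_eq,
    IsPseudohead, delP_le_epsP_iff]
  -- The two bounds on `h` amount to `4k + z ≤ a + 3b + 3c` and to `δ ≤ ε`, respectively.
  have hupper : lineShift a b c (k, l, z) ≤ b + c - k ↔
      0 ≤ b + c - k ∧ 2 * k + z - a - b - c ≤ 2 * (b + c - k) := lineShift_le_iff
  have hlower : lineShift a b c (k, l, z) ≤ k + z - b - c ↔
      0 ≤ k + z - b - c ∧ 2 * k + z - a - b - c ≤ 2 * (k + z - b - c) := lineShift_le_iff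
  simp only [epsP]
  omega

theorem mem_quasiheads_inter_compl_nondegenerate :
    (s, l, t) ∈ Quasiheads a b c ∩ (nondegenerate b c)ᶜ ↔
      l = s ∧ t ≤ s ∧ t + 2 * lineShift a b c (s, l, t) ≤ c ∧ s ≤ b + c ∧ b + c ≤ s + t := by
  simp only [Quasiheads, nondegenerate, Set.mem_inter_iff, Set.mem_compl_iff, Set.mem_ofPred_eq,
    IsQuasihead]
  have hbound : lineShift a b c (s, l, t) ≤ (c - t) / 2 ↔
      0 ≤ (c - t) / 2 ∧ 2 * s + t - a - b - c ≤ 2 * ((c - t) / 2) := lineShift_le_iff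
  omega

theorem bijOn_slideHead (hbc : c - 1 ≤ b) :
    Set.BijOn (slideHead a b c) (Heads a b c ∩ (nondegenerate b c)ᶜ)
      (Quasiheads a b c ∩ (nondegenerate b c)ᶜ) := by
  refine (slideHead a b c).bijOn ?_
  rintro ⟨k, l, z⟩
  have hline : lineShift a b c (slideHead a b c (k, l, z)) = lineShift a b c (k, l, z) :=
    lineShift_translateLine _ _
  have hnonneg : 0 ≤ lineShift a b c (k, l, z) := lineShift_nonneg
  simp only [slideHead, Equiv.coe_fn_mk, translateLine] at hline ⊢
  rw [mem_heads_inter_compl_nondegenerate, mem_quasiheads_inter_compl_nondegenerate, hline]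
  -- To get back `z ≤ k` when `h > 0`: from `z ≤ c` and `b + c ≤ k + z - h`, `z ≤ c ≤ b + h ≤ k`.
  omega

theorem headRange_of_mem_compl_nondegenerate
    (hx : x ∈ Heads a b c ∩ (nondegenerate b c)ᶜ) :
    headRange a b c x =
      (2 * x.1 + x.2.2 - b - c, a + 2 * b + 3 * c - (2 * x.1 + x.2.2)) := by
  simp only [Heads, nondegenerate, Set.mem_inter_iff, Set.mem_compl_iff, Set.mem_ofPred_eq,
    IsPseudohead] at hx
  have heps : epsP b c x.1 x.2.2 = x.1 + x.2.2 - b - c := max_eq_right (by omega)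
  have hneg : delP a b c x.1 x.2.2 ≤ epsP b c x.1 x.2.2 := by omega
  have hdef : ¬(x.2.2 = 0 ∧ a < x.2.1) := by
    rw [delP_le_epsP_iff] at hneg
    omega
  rw [headRange, if_neg hdef, Prod.mk.injEq]
  omega

theorem quasiheadRange_of_mem_compl_nondegenerate (hx : x ∈ (nondegenerate b c)ᶜ) :
    quasiheadRange a b c x =
      (2 * x.1 + x.2.2 - b - c, a + 2 * b + 3 * c - (2 * x.1 + x.2.2)) := by
  simp only [nondegenerate, Set.mem_compl_iff, Set.mem_ofPred_eq] at hx
  rw [quasiheadRange, Prod.mk.injEq]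
  omega

theorem headRange_eq_quasiheadRange_slideHead (hbc : c - 1 ≤ b)
    (hx : x ∈ Heads a b c ∩ (nondegenerate b c)ᶜ) :
    headRange a b c x = quasiheadRange a b c (slideHead a b c x) := by
  have hline : 2 * (slideHead a b c x).1 + (slideHead a b c x).2.2 = 2 * x.1 + x.2.2 := by
    simp only [slideHead, Equiv.coe_fn_mk, translateLine]
    ring
  rw [headRange_of_mem_compl_nondegenerate hx,
    quasiheadRange_of_mem_compl_nondegenerate ((bijOn_slideHead hbc).mapsTo hx).2, hline]

end Degenerate

theorem heads_to_quasiheads_general (a b c : ℤ) (hab : b - 1 ≤ a) (hbc : c - 1 ≤ b) :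
    ∃ φ : ℤ × ℤ × ℤ → ℤ × ℤ × ℤ,
      Set.BijOn φ (Heads a b c) (Quasiheads a b c) ∧
      ∀ x ∈ Heads a b c, headRange a b c x = quasiheadRange a b c (φ x) := by
  classical
  refine ⟨(nondegenerate b c).piecewise foldHead (slideHead a b c),
    bijOn_piecewise (bijOn_foldHead hab hbc) (bijOn_slideHead hbc), fun x hx => ?_⟩
  by_cases hnd : x ∈ nondegenerate b c
  · rw [Set.piecewise_eq_of_mem _ _ _ hnd]
    exact headRange_eq_quasiheadRange_foldHead hab hbc ⟨hx, hnd⟩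
  · rw [Set.piecewise_eq_of_notMem _ _ _ hnd]
    exact headRange_eq_quasiheadRange_slideHead hbc ⟨hx, hnd⟩

theorem heads_to_quasiheads (a b c : ℤ) (ha : 0 ≤ a) (hb : 0 ≤ b) (hc : 0 ≤ c)
    (hab : b - 1 ≤ a) (hac : c - 1 ≤ a) (hbc : c - 1 ≤ b) :
    ∃ φ : ℤ × ℤ × ℤ → ℤ × ℤ × ℤ,
      Set.BijOn φ (Heads a b c) (Quasiheads a b c) ∧
      ∀ x ∈ Heads a b c, headRange a b c x = quasiheadRange a b c (φ x) :=
  heads_to_quasiheads_general a b c hab hbc
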